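/- Let 𝐫 = ((r_1,s_1),…,(r_v,s_v)) and 𝐭 = ((t_1,u_1),…,(t_w,u_w)) be vectors of pairs of integers with all s_i positive, all u_j ≠ 0, all t_j/u_j ∉ ℤ_{≤0} and all r_i/s_i ∉ ℤ_{≤0}. Then the following are equivalent: (i) the sequence (Q_{𝐫,𝐭}(q; n))_{n≥0} is q-integral; (ii) for every b ∈ {1, …, d_{𝐫,𝐭}} and all x ∈ ℝ, Ξ_{𝐫,𝐭}(b, x) ≥ 0. -/

import Mathlib

open Polynomial
open scoped Classical

noncomputable section

/-- The generalized Dwork map `D_b(α)`: the unique rational whose reduced denominator is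
coprime to `b` and such that `b·D_b(α) − α ∈ {0, 1, …, b−1}`. -/
def dwork (b : ℕ) (α : ℚ) : ℚ :=
  if h : ∃ θ : ℚ, Nat.Coprime θ.den b ∧ ∃ k : ℤ, 0 ≤ k ∧ k < (b : ℤ) ∧ (b : ℚ) * θ - α = (k : ℚ)
  then h.choose else 0

/-- `α ∈ ℤ_{≤0}`. -/
def IsNonPosInt (α : ℚ) : Prop := ∃ m : ℤ, m ≤ 0 ∧ α = (m : ℚ)

/-- `α ∈ ℤ_{>0}`. -/
def IsPosInt (α : ℚ) : Prop := ∃ m : ℤ, 0 < m ∧ α = (m : ℚ)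

/-- `𝔫_α`. -/
def frakn (α : ℚ) : ℤ := if 0 ≤ α then α.num else |α.num| + 1

/-- `⟨x⟩`: the fractional part of `x` if `x ∉ ℤ`, and `1` if `x ∈ ℤ`. -/
def cangle (x : ℝ) : ℝ := if ∃ m : ℤ, x = (m : ℝ) then 1 else Int.fract x

/-- Christol order `x ⪯ y`. -/
def cle (x y : ℝ) : Prop := cangle x < cangle y ∨ (cangle x = cangle y ∧ y ≤ x)

/-- The step function `δ_b(r, s, ·)`. -/
def qdelta (b : ℕ) (r s : ℤ) (x : ℝ) : ℤ :=
  if Int.gcd (s / (Nat.gcd (Int.gcd r s) b : ℤ)) (((b / Nat.gcd (Int.gcd r s) b : ℕ)) : ℤ) = 1 then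
    ⌊(Nat.gcd (Int.gcd r s) b : ℝ) * x
        - ((dwork (b / Nat.gcd (Int.gcd r s) b) ((r : ℚ) / (s : ℚ)) : ℚ) : ℝ)
        - ((⌊1 - (r : ℚ) / (s : ℚ)⌋ : ℤ) : ℝ) / ((b / Nat.gcd (Int.gcd r s) b : ℕ) : ℝ)⌋ + 1
  else 0

/-- The Landau-type step function `Δ_b^{𝐫,𝐭}`. -/
def qDeltaFn {v w : ℕ} (b : ℕ) (rr : Fin v → ℤ × ℤ) (tt : Fin w → ℤ × ℤ) (x : ℝ) : ℤ :=
  (∑ i, qdelta b (rr i).1 (rr i).2 x) - (∑ j, qdelta b (tt j).1 (tt j).2 x)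

/-- The q-Pochhammer symbol `(q^r; q^s)_n` for `n ∈ ℕ`, inside `ℚ(q)`. -/
def qPoch (r s : ℤ) (n : ℕ) : RatFunc ℚ :=
  ∏ i ∈ Finset.range n, (1 - RatFunc.X ^ (r + s * (i : ℤ)))

/-- The q-Pochhammer symbol `(q^r; q^s)_n` for `n ∈ ℤ`. -/
def qPochZ (r s : ℤ) (n : ℤ) : RatFunc ℚ :=
  if 0 ≤ n then qPoch r s n.toNat else (qPoch (r - s) (-s) (-n).toNat)⁻¹

/-- Multiplicity of `p` in `g`: the largest `k` with `p^k ∣ g`. -/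
def polyMult (p g : Polynomial ℚ) : ℕ := sSup {k : ℕ | p ^ k ∣ g}

/-- The valuation `v_{φ_b}` on `ℚ(q)` attached to the `b`-th cyclotomic polynomial. -/
def cycVal (b : ℕ) (f : RatFunc ℚ) : ℤ :=
  (polyMult (cyclotomic b ℚ) f.num : ℤ) - (polyMult (cyclotomic b ℚ) f.denom : ℤ)

/-- The image of an integer polynomial in `ℚ(q)`. -/
def polyZ (g : Polynomial ℤ) : RatFunc ℚ :=
  algebraMap (Polynomial ℚ) (RatFunc ℚ) (g.map (Int.castRingHom ℚ))

/-- `f ∈ ℤ[q⁻¹, q]`. -/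
def IsIntLaurent (f : RatFunc ℚ) : Prop :=
  ∃ (m : ℕ) (g : Polynomial ℤ), f * RatFunc.X ^ m = polyZ g

/-- `f ∈ ℤ[q]`. -/
def IsIntPoly (f : RatFunc ℚ) : Prop := ∃ g : Polynomial ℤ, f = polyZ g

/-- The ratio attached to a pair of integers. -/
def ratOf (p : ℤ × ℤ) : ℚ := (p.1 : ℚ) / (p.2 : ℚ)

/-- The q-hypergeometric term `Q_{𝐫,𝐭}(q; n)`, `n ∈ ℕ`. -/
def qHyp {v w : ℕ} (rr : Fin v → ℤ × ℤ) (tt : Fin w → ℤ × ℤ) (n : ℕ) : RatFunc ℚ :=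
  (∏ i, qPoch (rr i).1 (rr i).2 n) / (∏ j, qPoch (tt j).1 (tt j).2 n)

/-- The q-hypergeometric term `Q_{𝐫,𝐭}(q; n)`, `n ∈ ℤ`. -/
def qHypZ {v w : ℕ} (rr : Fin v → ℤ × ℤ) (tt : Fin w → ℤ × ℤ) (n : ℤ) : RatFunc ℚ :=
  (∏ i, qPochZ (rr i).1 (rr i).2 n) / (∏ j, qPochZ (tt j).1 (tt j).2 n)

/-- `c := gcd(r, s, b)`. -/
def cOf (p : ℤ × ℤ) (b : ℕ) : ℕ := Nat.gcd (Int.gcd p.1 p.2) b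

/-- Membership in `V_b` (resp. `W_b`): `gcd(s, b) = gcd(r, s, b)`. -/
def inV (p : ℤ × ℤ) (b : ℕ) : Prop := Nat.gcd p.2.natAbs b = cOf p b

/-- `d_{𝐫,𝐭}`: the lcm of all the `s_i` and `u_j`. -/
def dRT {v w : ℕ} (rr : Fin v → ℤ × ℤ) (tt : Fin w → ℤ × ℤ) : ℕ :=
  Nat.lcm (Finset.univ.lcm fun i => ((rr i).2).natAbs)
    (Finset.univ.lcm fun j => ((tt j).2).natAbs)

/-- `b̃`: the greatest divisor of `b` coprime to `d`. -/
def btilde (d b : ℕ) : ℕ := Nat.findGreatest (fun k => k ∣ b ∧ Nat.Coprime k d) b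

/-- The unique `a ∈ {1,…,d}` with `a·b̃ ≡ 1 (mod d)`. -/
def aOf (d b : ℕ) : ℕ :=
  if h : ∃ a, 1 ≤ a ∧ a ≤ d ∧ (a * btilde d b) % d = 1 % d then h.choose else 1

/-- The representative of `b` modulo `d` lying in `{1,…,d}`. -/
def repMod (d b : ℕ) : ℕ := if b % d = 0 then d else b % d

/-- The jump abscissa `(⟨e·α⟩ + k)/c − ⌊1 − a·α⌋`. -/
def jumpPt (p : ℤ × ℤ) (b : ℕ) (a ei : ℤ) (k : ℕ) : ℝ :=
  (cangle (((ei : ℚ) * ratOf p : ℚ) : ℝ) + (k : ℝ)) / (cOf p b : ℝ)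
    - ((⌊1 - (a : ℚ) * ratOf p⌋ : ℤ) : ℝ)

/-- Number of pairs `(i,k)` with jump abscissa `⪯ x` coming from one pair `p`. -/
def XiCount (p : ℤ × ℤ) (b : ℕ) (a ei : ℤ) (x : ℝ) : ℕ :=
  if inV p b then ((Finset.range (cOf p b)).filter fun k => cle (jumpPt p b a ei k) x).card else 0

/-- The generalized Christol step function `Ξ_{𝐫,𝐭}(b, ·)`, relative to choices `e`, `f`. -/
def Xi {v w : ℕ} (rr : Fin v → ℤ × ℤ) (tt : Fin w → ℤ × ℤ) (b : ℕ)
    (e : Fin v → ℤ) (f : Fin w → ℤ) (x : ℝ) : ℤ :=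
  (∑ i, (XiCount (rr i) b ((aOf (dRT rr tt) b : ℕ) : ℤ) (e i) x : ℤ))
    - (∑ j, (XiCount (tt j) b ((aOf (dRT rr tt) b : ℕ) : ℤ) (f j) x : ℤ))

/-- `ei` is an admissible choice for the pair `p` and `b`: positive with `b·ei ≡ c (mod s)`. -/
def goodChoice (p : ℤ × ℤ) (b : ℕ) (ei : ℤ) : Prop :=
  inV p b → 0 < ei ∧ p.2 ∣ ((b : ℤ) * ei - (cOf p b : ℤ))

end

/-!
Up to sign and a power of `q`, the factor `1 - q ^ m` is the product of the `Φ_b` with `b ∣ m`.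
Hence the exponent of `Φ_b` in `Q(q; n)` is the number of `(i, k)` with `k < n` and
`b ∣ r_i + s_i k`, minus the corresponding number for the denominator. These exponents and the
power of `q` are bounded below linearly in `n`, so the sequence is `q`-integral iff, for all large
`b`, no exponent of `Φ_b` is negative.

For fixed `b` the exponent is additive under `n ↦ n + b`, so it suffices to count the solutions
`0 ≤ k < b` of `b ∣ r + s k`. For large `b` the points `(k + r / s) / b` attached to them lie in
`(0, 1]` and are the points `(⟨e r / s⟩ + l) / c`, `0 ≤ l < c`. Moreover two solutions `k`, `k'`
attached to `α`, `α'` satisfy `k < k'` whenever `k + α < k' + α'`. If `k + α = k' + α'`, then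
`α' - α` is an integer, and the shifts by `⌊1 - a α⌋` make the Christol order compare `k` with `k'`.
So the signed counts of the solutions `k ≤ x` and the values of `Ξ` are the same partial sums, and
`Ξ` depends on `b` only modulo `d`.
-/

section WeightedSums

lemma forall_sum_filter_nonneg_iff {J α L : Type*} [LinearOrder L] {r : α → α → Prop}
    [DecidableRel r] (hr : ∀ ⦃x y z⦄, r x y → r y z → r x z) (S : Finset J) (f : J → α)
    (g : J → L) (σ : J → ℤ) (hfg : ∀ i ∈ S, ∀ j ∈ S, r (f i) (f j) ↔ g i ≤ g j) :
    (∀ x, 0 ≤ ∑ i ∈ S with r (f i) x, σ i) ↔ ∀ j ∈ S, 0 ≤ ∑ i ∈ S with g i ≤ g j, σ i := by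
  refine ⟨fun h j hj ↦ ?_, fun h x ↦ ?_⟩
  · rw [← Finset.filter_congr fun i hi ↦ hfg i hi j hj]
    exact h (f j)
  · obtain hempty | hne := (S.filter fun i ↦ r (f i) x).eq_empty_or_nonempty
    · simp [hempty]
    · obtain ⟨j, hj, hmax⟩ := Finset.exists_max_image _ g hne
      rw [Finset.mem_filter] at hj
      have hdown : ∀ i ∈ S, r (f i) x ↔ g i ≤ g j := fun i hi ↦
        ⟨fun hix ↦ hmax i (Finset.mem_filter.2 ⟨hi, hix⟩),
          fun hij ↦ hr ((hfg i hi j hj.1).2 hij) hj.2⟩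
      rw [Finset.filter_congr hdown]
      exact h j hj.1

lemma forall_nonneg_of_add_period {F : ℕ → ℤ} {b : ℕ} (hb : 0 < b)
    (hadd : ∀ n, F (b + n) = F b + F n) (h : ∀ n ≤ b, 0 ≤ F n) (n : ℕ) : 0 ≤ F n := by
  induction n using Nat.strong_induction_on with
  | _ n ih =>
    obtain hn | hn := le_or_gt n b
    · exact h n hn
    · obtain ⟨m, rfl⟩ := Nat.exists_eq_add_of_le hn.le
      rw [hadd]
      exact add_nonneg (h b le_rfl) (ih m (by lia))

lemma eventually_iff_forall_residue {d : ℕ} (hd : 0 < d) {P Q : ℕ → Prop}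
    (h : ∀ᶠ b in Filter.atTop, ∀ b₀, b ≡ b₀ [MOD d] → (Q b ↔ P b₀)) :
    (∀ᶠ b in Filter.atTop, Q b) ↔ ∀ b₀, 1 ≤ b₀ → b₀ ≤ d → P b₀ := by
  refine ⟨fun hQ b₀ _ _ ↦ ?_, fun hP ↦ ?_⟩
  · obtain ⟨B, hB⟩ := Filter.eventually_atTop.1 (hQ.and h)
    obtain ⟨hQb, hiff⟩ := hB (b₀ + d * B) (by nlinarith)
    exact (hiff b₀ (by simp [Nat.ModEq])).1 hQb
  · filter_upwards [h] with b hb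
    have hrep : 1 ≤ repMod d b ∧ repMod d b ≤ d ∧ b ≡ repMod d b [MOD d] := by
      unfold repMod
      split_ifs with h0
      · exact ⟨hd, le_rfl, by simp [Nat.ModEq, h0]⟩
      · exact ⟨Nat.pos_of_ne_zero h0, (Nat.mod_lt b hd).le, (Nat.mod_modEq b d).symm⟩
    exact (hb _ hrep.2.2).2 (hP _ hrep.1 hrep.2.1)

end WeightedSums

section ChristolOrder

lemma cangle_eq_toIocMod (x : ℝ) : cangle x = toIocMod one_pos 0 x := by
  symm
  rw [toIocMod_eq_iff, cangle, zero_add]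
  split_ifs with h
  · obtain ⟨m, rfl⟩ := h
    exact ⟨⟨one_pos, le_rfl⟩, m - 1, by simp⟩
  · refine ⟨⟨Int.fract_pos.2 fun h' ↦ h ⟨_, h'⟩, (Int.fract_lt_one x).le⟩, ⌊x⌋, ?_⟩
    rw [zsmul_one, Int.fract_add_floor]

lemma cangle_mem_Ioc (x : ℝ) : cangle x ∈ Set.Ioc (0 : ℝ) 1 := by
  simpa [cangle_eq_toIocMod] using toIocMod_mem_Ioc one_pos 0 x

lemma exists_cangle_eq_sub_intCast (x : ℝ) : ∃ j : ℤ, cangle x = x - j :=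
  ⟨toIocDiv one_pos 0 x, by rw [cangle_eq_toIocMod, ← zsmul_one, self_sub_toIocDiv_zsmul]⟩

lemma cangle_sub_intCast {y : ℝ} (hy : y ∈ Set.Ioc (0 : ℝ) 1) (j : ℤ) : cangle (y - j) = y := by
  rw [cangle_eq_toIocMod, ← zsmul_one, toIocMod_sub_zsmul, toIocMod_eq_self, zero_add]
  exact hy

lemma cle_trans ⦃x y z : ℝ⦄ (hxy : cle x y) (hyz : cle y z) : cle x z := by
  unfold cle at *
  grind

end ChristolOrder

section Congruence

variable {p : ℤ × ℤ} {b b' : ℕ}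

lemma cOf_congr (h : (b : ℤ) ≡ b' [ZMOD p.2]) : cOf p b = cOf p b' := by
  have hgcd : b ≡ b' [MOD Int.gcd p.1 p.2] :=
    Int.natCast_modEq_iff.1 (h.of_dvd (Int.gcd_dvd_right _ _))
  rw [cOf, cOf, Nat.gcd_comm, hgcd.gcd_eq, Nat.gcd_comm]

lemma inV_congr (h : (b : ℤ) ≡ b' [ZMOD p.2]) : inV p b ↔ inV p b' := by
  have hs : b ≡ b' [MOD p.2.natAbs] := Int.natCast_modEq_iff.1 (h.of_dvd Int.natAbs_dvd_self)
  rw [inV, inV, cOf_congr h, Nat.gcd_comm, hs.gcd_eq, Nat.gcd_comm]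

lemma goodChoice_congr (h : (b : ℤ) ≡ b' [ZMOD p.2]) (e : ℤ) :
    goodChoice p b e ↔ goodChoice p b' e := by
  have he : (b : ℤ) * e - cOf p b' ≡ b' * e - cOf p b' [ZMOD p.2] :=
    (h.mul_right e).sub_right _
  rw [goodChoice, goodChoice, inV_congr h, cOf_congr h, he.dvd_iff]

lemma XiCount_congr (h : (b : ℤ) ≡ b' [ZMOD p.2]) (a e : ℤ) (x : ℝ) :
    XiCount p b a e x = XiCount p b' a e x := by
  unfold XiCount jumpPt
  rw [cOf_congr h]
  exact if_congr (inV_congr h) rfl rfl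

lemma inV_iff_gcd_dvd (p : ℤ × ℤ) (b : ℕ) : inV p b ↔ (Int.gcd p.2 b : ℤ) ∣ p.1 := by
  have hcOf : cOf p b = Nat.gcd p.1.natAbs (Int.gcd p.2 b) := by
    rw [cOf, Int.gcd, Int.gcd, Int.natAbs_natCast, Nat.gcd_assoc]
  rw [inV, hcOf, Int.natCast_dvd, ← Nat.gcd_eq_right_iff_dvd, eq_comm, Int.gcd,
    Int.natAbs_natCast]

lemma exists_goodChoice (hs : p.2 ≠ 0) (b : ℕ) : ∃ e, goodChoice p b e := by
  have hgcd := Int.gcd_eq_gcd_ab p.2 b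
  set x := Int.gcdA p.2 b
  set y := Int.gcdB p.2 b
  refine ⟨y % p.2 + |p.2|, fun hV ↦
    ⟨add_pos_of_nonneg_of_pos (Int.emod_nonneg _ hs) (abs_pos.2 hs), ?_⟩⟩
  have hc : (cOf p b : ℤ) = p.2 * x + b * y := by rw [← hgcd, ← hV, Int.gcd, Int.natAbs_natCast]
  obtain ⟨t, ht⟩ : p.2 ∣ |p.2| := (dvd_abs _ _).2 dvd_rfl
  exact ⟨b * t - b * (y / p.2) - x, by rw [hc, Int.emod_def]; linear_combination (b : ℤ) * ht⟩

end Congruence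

section Solutions

lemma pos_of_dvd_add_mul {r s k b : ℤ} (hr : |r| < b) (hdvd : b ∣ r + s * k)
    (hpos : 0 < s * (r + s * k)) : 0 < k := by
  obtain ⟨m, hm⟩ := hdvd
  have hb : 0 < b := (abs_nonneg r).trans_lt hr
  by_contra! hk
  have hsm : |s| ≤ s * m := by
    have hsm_pos : 0 < s * m := by
      rw [hm, mul_left_comm] at hpos
      exact pos_of_mul_pos_right hpos hb.le
    have hm0 : m ≠ 0 := right_ne_zero_of_mul hsm_pos.ne'
    rw [← abs_of_pos hsm_pos, abs_mul]
    exact le_mul_of_one_le_right (abs_nonneg s) (Int.one_le_abs hm0)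
  have hs : 0 < |s| := abs_pos.2 (left_ne_zero_of_mul hpos.ne')
  have : |s| * b < |s| * b := calc
    |s| * b ≤ s * m * b := mul_le_mul_of_nonneg_right hsm hb.le
    _ = s * r + s ^ 2 * k := by linear_combination -s * hm
    _ ≤ s * r := add_le_of_nonpos_right (mul_nonpos_of_nonneg_of_nonpos (sq_nonneg s) hk)
    _ ≤ |s| * |r| := (le_abs_self _).trans_eq (abs_mul s r)
    _ < |s| * b := mul_lt_mul_of_pos_left hr hs
  exact this.false

lemma cast_add_ratOf {p : ℤ × ℤ} (hs : p.2 ≠ 0) (k : ℤ) :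
    (p.2 : ℝ) * (k + (ratOf p : ℝ)) = (p.1 + p.2 * k : ℤ) := by
  have : (p.2 : ℝ) ≠ 0 := Int.cast_ne_zero.2 hs
  rw [ratOf]
  push_cast
  field_simp
  ring

lemma add_ratOf_pos_iff {p : ℤ × ℤ} {b k : ℤ} (hp : ∀ n : ℕ, p.1 + p.2 * n ≠ 0)
    (hs : p.2 ≠ 0) (hb : |p.1| < b) (hdvd : b ∣ p.1 + p.2 * k) :
    0 < (k : ℝ) + ratOf p ↔ 0 ≤ k := by
  have hs2 : (0 : ℝ) < (p.2 : ℝ) ^ 2 := by positivity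
  have hsq : (p.2 : ℝ) ^ 2 * (k + ratOf p) = (p.2 * (p.1 + p.2 * k) : ℤ) := by
    rw [sq, mul_assoc, cast_add_ratOf hs, Int.cast_mul]
  rw [← mul_pos_iff_of_pos_left hs2, hsq, Int.cast_pos]
  refine ⟨fun h ↦ (pos_of_dvd_add_mul hb hdvd h).le, fun hk ↦ ?_⟩
  lift k to ℕ using hk
  refine lt_of_le_of_ne (le_of_not_gt fun hneg ↦ ?_) (mul_ne_zero hs (hp k)).symm
  have hk' : (0 : ℤ) < -k :=
    pos_of_dvd_add_mul (r := -p.1) (s := p.2) (by rwa [abs_neg])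
      (by rwa [mul_neg, ← neg_add, dvd_neg]) (by linarith)
  lia

lemma lt_of_add_ratOf_lt {p p' : ℤ × ℤ} {b k k' : ℤ} (hs : p.2 ≠ 0) (hs' : p'.2 ≠ 0)
    (hb : |p.2 * p'.1 - p'.2 * p.1| < b) (hdvd : b ∣ p.1 + p.2 * k)
    (hdvd' : b ∣ p'.1 + p'.2 * k') (hlt : (k : ℝ) + ratOf p < k' + ratOf p') : k < k' := by
  rw [← sub_pos]
  refine pos_of_dvd_add_mul (s := p.2 * p'.2) hb ?_ ?_
  · rw [show p.2 * p'.1 - p'.2 * p.1 + p.2 * p'.2 * (k' - k)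
      = p.2 * (p'.1 + p'.2 * k') - p'.2 * (p.1 + p.2 * k) by ring]
    exact (hdvd'.mul_left _).sub (hdvd.mul_left _)
  · have hcast : ((p.2 * p'.2 * (p.2 * p'.1 - p'.2 * p.1 + p.2 * p'.2 * (k' - k)) : ℤ) : ℝ)
        = (p.2 * p'.2 : ℝ) ^ 2 * ((k' + ratOf p') - (k + ratOf p)) := by
      have h := cast_add_ratOf hs k
      have h' := cast_add_ratOf hs' k'
      push_cast at h h' ⊢
      linear_combination (p.2 * p'.2 ^ 2 : ℝ) * h - (p.2 ^ 2 * p'.2 : ℝ) * h'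
    rw [← Int.cast_pos (R := ℝ), hcast]
    have := sub_pos.2 hlt
    positivity

/-- The indices `k < b` of the factors `1 - q ^ (r + s k)` divisible by the `b`-th cyclotomic
polynomial, for `p = (r, s)`. -/
def dvdIndices (p : ℤ × ℤ) (b : ℕ) : Finset ℕ :=
  (Finset.range b).filter fun k ↦ (b : ℤ) ∣ p.1 + p.2 * k

/-- The jump abscissa of the Christol step function that corresponds to the index
`k ∈ dvdIndices p b`. It involves no choice of `e`. -/
noncomputable def indexJump (p : ℤ × ℤ) (b : ℕ) (a : ℤ) (k : ℕ) : ℝ :=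
  (k + (ratOf p : ℝ)) / b - (⌊1 - (a : ℚ) * ratOf p⌋ : ℤ)

lemma exists_mul_add_eq_of_dvd {r s b c e k : ℤ} (he : s ∣ b * e - c) (hdvd : b ∣ r + s * k) :
    ∃ t, c * (r + s * k) = b * (e * r + s * t) := by
  obtain ⟨g, hg⟩ := he
  obtain ⟨m, hm⟩ := hdvd
  exact ⟨e * k - g * m, by linear_combination (-(r + s * k)) * hg - s * g * hm⟩

lemma exists_dvd_of_mul_add_eq {r s b c e : ℤ} (hc : c ≠ 0) (hr : c ∣ r) (hs : c ∣ s)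
    (hb : c ∣ b) (he : s ∣ b * e - c) (t : ℤ) :
    ∃ k, b ∣ r + s * k ∧ c * (r + s * k) = b * (e * r + s * t) := by
  obtain ⟨g, hg⟩ := he
  obtain ⟨r', rfl⟩ := hr
  obtain ⟨b', rfl⟩ := hb
  have hk : c * (c * r' + s * (g * r' + b' * t)) = c * b' * (e * (c * r') + s * t) := by
    linear_combination (-(c * r')) * hg
  obtain ⟨s', rfl⟩ := hs
  exact ⟨g * r' + b' * t, ⟨e * r' + s' * t, mul_left_cancel₀ hc (by linear_combination hk)⟩, hk⟩

end Solutions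

section JumpAbscissae

variable {p p' : ℤ × ℤ} {b : ℕ} {a e : ℤ}

lemma add_ratOf_div_mem_Ioc_iff {b k : ℤ} (hp : ∀ n : ℕ, p.1 + p.2 * n ≠ 0) (hs : p.2 ≠ 0)
    (hb : |p.1| < b) (hdvd : b ∣ p.1 + p.2 * k) :
    ((k : ℝ) + ratOf p) / b ∈ Set.Ioc (0 : ℝ) 1 ↔ k ∈ Set.Ico 0 b := by
  have hb0 : (0 : ℝ) < b := Int.cast_pos.2 ((abs_nonneg p.1).trans_lt hb)
  have hdvd' : b ∣ p.1 + p.2 * (k - b) := by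
    rw [mul_sub, ← add_sub_assoc]
    exact hdvd.sub (dvd_mul_left b _)
  have hupper := (add_ratOf_pos_iff hp hs hb hdvd').not
  rw [Set.mem_Ioc, Set.mem_Ico, div_pos_iff_of_pos_right hb0, div_le_one hb0,
    add_ratOf_pos_iff hp hs hb hdvd, ← sub_nonneg.not.trans not_le, ← hupper, not_lt,
    Int.cast_sub, ← sub_nonpos (a := (k : ℝ) + ratOf p), sub_add_eq_add_sub]

lemma add_intCast_div_mem_Ioc_iff {θ : ℝ} (hθ : θ ∈ Set.Ioc (0 : ℝ) 1) {c : ℤ} (hc : 0 < c)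
    (l : ℤ) : (θ + l) / c ∈ Set.Ioc (0 : ℝ) 1 ↔ l ∈ Set.Ico 0 c := by
  have hc' : (0 : ℝ) < c := Int.cast_pos.2 hc
  obtain ⟨hθ0, hθ1⟩ := hθ
  rw [Set.mem_Ioc, Set.mem_Ico, div_pos_iff_of_pos_right hc', div_le_one hc']
  refine and_congr ⟨fun h ↦ ?_, fun h ↦ ?_⟩ ⟨fun h ↦ ?_, fun h ↦ ?_⟩
  · have : (-1 : ℝ) < l := by linarith
    exact Int.add_one_le_of_lt (by exact_mod_cast this)
  · exact add_pos_of_pos_of_nonneg hθ0 (Int.cast_nonneg h)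
  · have : (l : ℝ) < c := by linarith
    exact_mod_cast this
  · have : (l : ℝ) + 1 ≤ c := by exact_mod_cast Int.add_one_le_of_lt h
    linarith

lemma add_ratOf_div_eq_div_iff {b c : ℤ} (hs : p.2 ≠ 0) (hb : b ≠ 0) (hc : c ≠ 0) (e k t : ℤ) :
    ((k : ℝ) + ratOf p) / b = (e * (ratOf p : ℝ) + t) / c ↔
      c * (p.1 + p.2 * k) = b * (e * p.1 + p.2 * t) := by
  have hs' : (p.2 : ℝ) ≠ 0 := Int.cast_ne_zero.2 hs
  rw [div_eq_div_iff (Int.cast_ne_zero.2 hb) (Int.cast_ne_zero.2 hc), ← mul_right_inj' hs',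
    ← Int.cast_inj (α := ℝ), ratOf]
  push_cast
  refine Eq.congr ?_ ?_
  · field_simp
    ring
  · field_simp

lemma mem_dvdIndices {k : ℕ} : k ∈ dvdIndices p b ↔ k < b ∧ (b : ℤ) ∣ p.1 + p.2 * k := by
  simp [dvdIndices]

lemma add_ratOf_div_mem_Ioc_of_mem_dvdIndices (hp : ∀ n : ℕ, p.1 + p.2 * n ≠ 0) (hs : p.2 ≠ 0)
    (hb : |p.1| < b) {k : ℕ} (hk : k ∈ dvdIndices p b) :
    ((k : ℝ) + ratOf p) / b ∈ Set.Ioc (0 : ℝ) 1 := by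
  rw [mem_dvdIndices] at hk
  have := add_ratOf_div_mem_Ioc_iff hp hs hb hk.2
  simp only [Int.cast_natCast] at this
  exact this.2 ⟨Int.natCast_nonneg k, Int.ofNat_lt.2 hk.1⟩

lemma cOf_dvd (p : ℤ × ℤ) (b : ℕ) :
    (cOf p b : ℤ) ∣ p.1 ∧ (cOf p b : ℤ) ∣ p.2 ∧ (cOf p b : ℤ) ∣ b := by
  have hgcd : (cOf p b : ℤ) ∣ Int.gcd p.1 p.2 := Int.natCast_dvd_natCast.2 (Nat.gcd_dvd_left _ _)
  exact ⟨hgcd.trans (Int.gcd_dvd_left _ _), hgcd.trans (Int.gcd_dvd_right _ _),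
    Int.natCast_dvd_natCast.2 (Nat.gcd_dvd_right _ _)⟩

lemma image_indexJump_dvdIndices (hp : ∀ n : ℕ, p.1 + p.2 * n ≠ 0) (hs : p.2 ≠ 0)
    (hb : |p.1| < b) (he : p.2 ∣ b * e - cOf p b) (a : ℤ) :
    (dvdIndices p b).image (indexJump p b a) = (Finset.range (cOf p b)).image (jumpPt p b a e) := by
  have hb0 : 0 < (b : ℤ) := (abs_nonneg p.1).trans_lt hb
  have hc0 : 0 < (cOf p b : ℤ) :=
    Int.natCast_pos.2 (Nat.gcd_pos_of_pos_right _ (Int.natCast_pos.1 hb0))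
  obtain ⟨hc_r, hc_s, hc_b⟩ := cOf_dvd p b
  obtain ⟨j, hj⟩ := exists_cangle_eq_sub_intCast (((e : ℚ) * ratOf p : ℚ) : ℝ)
  have hbridge (k t : ℤ) : ((k : ℝ) + ratOf p) / b =
      (cangle (((e : ℚ) * ratOf p : ℚ) : ℝ) + (t + j : ℤ)) / cOf p b ↔
        (cOf p b : ℤ) * (p.1 + p.2 * k) = b * (e * p.1 + p.2 * t) := by
    rw [← add_ratOf_div_eq_div_iff hs hb0.ne' hc0.ne', hj]
    push_cast
    rw [sub_add_add_cancel]
  have hrange {k l : ℤ} (hdvd : (b : ℤ) ∣ p.1 + p.2 * k) (hkl : ((k : ℝ) + ratOf p) / b =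
      (cangle (((e : ℚ) * ratOf p : ℚ) : ℝ) + l) / cOf p b) :
      k ∈ Set.Ico 0 (b : ℤ) ↔ l ∈ Set.Ico 0 (cOf p b : ℤ) := by
    rw [← add_ratOf_div_mem_Ioc_iff hp hs hb hdvd,
      ← add_intCast_div_mem_Ioc_iff (cangle_mem_Ioc _) hc0, Int.cast_natCast, hkl, Int.cast_natCast]
  ext x
  simp only [Finset.mem_image, Finset.mem_range, mem_dvdIndices]
  constructor
  · rintro ⟨k, ⟨hkb, hdvd⟩, rfl⟩
    obtain ⟨t, ht⟩ := exists_mul_add_eq_of_dvd he hdvd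
    have hkt := (hbridge k t).2 ht
    obtain ⟨hl0, hlc⟩ := (hrange hdvd hkt).1 ⟨by positivity, Int.ofNat_lt.2 hkb⟩
    lift t + j to ℕ using hl0 with l
    exact ⟨l, Int.ofNat_lt.1 hlc, by simp_all [indexJump, jumpPt]⟩
  · rintro ⟨l, hlc, rfl⟩
    obtain ⟨k, hdvd, hk⟩ := exists_dvd_of_mul_add_eq hc0.ne' hc_r hc_s hc_b he (l - j)
    have hkl := (hbridge k (l - j)).2 hk
    rw [sub_add_cancel] at hkl
    obtain ⟨hk0, hkb⟩ := (hrange hdvd hkl).2 ⟨by positivity, Int.ofNat_lt.2 hlc⟩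
    lift k to ℕ using hk0
    exact ⟨k, ⟨Int.ofNat_lt.1 hkb, hdvd⟩, by simp_all [indexJump, jumpPt]⟩

lemma indexJump_injective (hb : b ≠ 0) : Function.Injective (indexJump p b a) := by
  intro k l hkl
  have hb' : (b : ℝ) ≠ 0 := Nat.cast_ne_zero.2 hb
  simpa [indexJump, div_left_inj' hb'] using hkl

lemma jumpPt_injective (hb : b ≠ 0) : Function.Injective (jumpPt p b a e) := by
  intro k l hkl
  have hc : (cOf p b : ℝ) ≠ 0 := Nat.cast_ne_zero.2 (Nat.gcd_ne_zero_right hb)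
  simpa [jumpPt, div_left_inj' hc] using hkl

lemma dvdIndices_eq_empty (h : ¬ inV p b) : dvdIndices p b = ∅ := by
  refine Finset.filter_eq_empty_iff.2 fun k _ hdvd ↦ h ((inV_iff_gcd_dvd p b).2 ?_)
  rw [← dvd_add_left ((Int.gcd_dvd_left p.2 b).mul_right k)]
  exact (Int.gcd_dvd_right p.2 b).trans hdvd

lemma XiCount_eq_card_dvdIndices (hp : ∀ n : ℕ, p.1 + p.2 * n ≠ 0) (hs : p.2 ≠ 0)
    (hb : |p.1| < b) (he : goodChoice p b e) (x : ℝ) :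
    XiCount p b a e x = ((dvdIndices p b).filter fun k ↦ cle (indexJump p b a k) x).card := by
  have hb0 : b ≠ 0 := by
    rintro rfl
    exact (abs_nonneg p.1).not_gt hb
  rw [XiCount]
  split_ifs with hV
  · rw [← Finset.card_image_of_injective _ (jumpPt_injective hb0),
      ← Finset.card_image_of_injective _ (indexJump_injective hb0),
      ← Finset.filter_image (p := (cle · x)), ← Finset.filter_image (p := (cle · x)),
      image_indexJump_dvdIndices hp hs hb (he hV).2]
  · rw [dvdIndices_eq_empty hV, Finset.filter_empty, Finset.card_empty]

lemma floor_one_sub_mul_add_intCast (a j : ℤ) (α : ℚ) :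
    ⌊1 - (a : ℚ) * (α + j)⌋ = ⌊1 - (a : ℚ) * α⌋ - a * j := by
  rw [← Int.floor_sub_intCast]
  congr 1
  push_cast
  ring

lemma cle_indexJump_iff (hp : ∀ n : ℕ, p.1 + p.2 * n ≠ 0) (hp' : ∀ n : ℕ, p'.1 + p'.2 * n ≠ 0)
    (hs : p.2 ≠ 0) (hs' : p'.2 ≠ 0) (hb : |p.1| < b) (hb' : |p'.1| < b)
    (hpp' : |p.2 * p'.1 - p'.2 * p.1| < b) (ha : 0 < a) {k k' : ℕ}
    (hk : k ∈ dvdIndices p b) (hk' : k' ∈ dvdIndices p' b) :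
    cle (indexJump p b a k) (indexJump p' b a k') ↔ k ≤ k' := by
  have hb0 : (0 : ℝ) < b := by exact_mod_cast (abs_nonneg p.1).trans_lt hb
  rw [cle, indexJump, indexJump,
    cangle_sub_intCast (add_ratOf_div_mem_Ioc_of_mem_dvdIndices hp hs hb hk),
    cangle_sub_intCast (add_ratOf_div_mem_Ioc_of_mem_dvdIndices hp' hs' hb' hk'),
    div_lt_div_iff_of_pos_right hb0, div_left_inj' hb0.ne']
  have hdvd := (mem_dvdIndices.1 hk).2
  have hdvd' := (mem_dvdIndices.1 hk').2
  obtain hlt | heq | hgt := lt_trichotomy ((k : ℝ) + ratOf p) (k' + ratOf p')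
  · have := lt_of_add_ratOf_lt hs hs' hpp' hdvd hdvd' (by exact_mod_cast hlt)
    lia
  -- The cyclic arguments agree, and the tie is broken by the floors, which differ by `a (k - k')`.
  · have hα : ratOf p' = ratOf p + ((k - k' : ℤ) : ℚ) := by
      rw [← Rat.cast_inj (α := ℝ)]
      push_cast
      linarith
    have hfloor : ⌊1 - (a : ℚ) * ratOf p'⌋ = ⌊1 - (a : ℚ) * ratOf p⌋ - a * (k - k') := by
      rw [hα, floor_one_sub_mul_add_intCast]
    rw [heq, sub_le_sub_iff_left, Int.cast_le, hfloor]
    simp only [lt_irrefl, true_and, false_or, le_sub_self_iff]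
    rw [← not_lt, mul_pos_iff_of_pos_left ha]
    lia
  · have hpp'' : |p'.2 * p.1 - p.2 * p'.1| < b := by rwa [abs_sub_comm]
    have := lt_of_add_ratOf_lt hs' hs hpp'' hdvd' hdvd (by exact_mod_cast hgt)
    simp only [hgt.not_gt, hgt.ne', false_and, or_self, false_iff]
    lia

end JumpAbscissae

section CountingDivisibleFactors

variable {p : ℤ × ℤ} {b : ℕ} {a : ℤ}

/-- The number of factors of `(q ^ r; q ^ s)_n` divisible by the `b`-th cyclotomic polynomial,
for `p = (r, s)`. -/
def divCount (p : ℤ × ℤ) (b n : ℕ) : ℕ :=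
  Nat.count (fun k : ℕ ↦ (b : ℤ) ∣ p.1 + p.2 * k) n

lemma divCount_add_period (p : ℤ × ℤ) (b n : ℕ) :
    divCount p b (b + n) = divCount p b b + divCount p b n := by
  have hperiodic (k : ℕ) : (b : ℤ) ∣ p.1 + p.2 * (b + k : ℕ) ↔ (b : ℤ) ∣ p.1 + p.2 * k := by
    rw [Nat.cast_add, mul_add, add_left_comm]
    exact dvd_add_right (dvd_mul_left _ _)
  simp only [divCount, Nat.count_add, hperiodic]

lemma card_dvdIndices_filter_le (p : ℤ × ℤ) (b x : ℕ) :
    ((dvdIndices p b).filter (· ≤ x)).card = divCount p b (min b (x + 1)) := by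
  rw [divCount, Nat.count_eq_card_filter_range, dvdIndices, Finset.filter_filter]
  congr 1
  ext k
  simp only [Finset.mem_filter, Finset.mem_range, lt_min_iff, Nat.lt_succ_iff]
  tauto

variable {ι : Type*} [Fintype ι]

lemma sum_sigma_filter_eq_sum_mul_card {κ : Type*} (s : ι → Finset κ) (Q : ι → κ → Prop)
    [∀ i, DecidablePred (Q i)] (σ : ι → ℤ) :
    ∑ j ∈ Finset.univ.sigma s with Q j.1 j.2, σ j.1 = ∑ i, σ i * ((s i).filter (Q i)).card := by
  rw [Finset.sum_filter, Finset.sum_sigma]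
  refine Finset.sum_congr rfl fun i _ ↦ ?_
  rw [← Finset.sum_filter]
  simp [mul_comm]

lemma forall_sum_divCount_nonneg_iff_dvdIndices (hb : 0 < b) (p : ι → ℤ × ℤ) (σ : ι → ℤ) :
    (∀ n, 0 ≤ ∑ i, σ i * (divCount (p i) b n : ℤ)) ↔
      ∀ x, 0 ≤ ∑ i, σ i * (((dvdIndices (p i) b).filter (· ≤ x)).card : ℤ) := by
  simp only [card_dvdIndices_filter_le]
  refine ⟨fun h x ↦ h _, fun h ↦ forall_nonneg_of_add_period hb (fun n ↦ ?_) fun n hn ↦ ?_⟩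
  · simp only [divCount_add_period, Nat.cast_add, mul_add, Finset.sum_add_distrib]
  · obtain - | x := n
    · simp [divCount]
    · simpa only [min_eq_right hn] using h x

theorem forall_sum_divCount_nonneg_iff_XiCount {p : ι → ℤ × ℤ} {e : ι → ℤ} (σ : ι → ℤ)
    (hp : ∀ i, ∀ n : ℕ, (p i).1 + (p i).2 * n ≠ 0) (hs : ∀ i, (p i).2 ≠ 0) (hb0 : 0 < b)
    (hb : ∀ i, |(p i).1| < b) (hbb : ∀ i j, |(p i).2 * (p j).1 - (p j).2 * (p i).1| < b)
    (ha : 0 < a) (he : ∀ i, goodChoice (p i) b (e i)) :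
    (∀ n, 0 ≤ ∑ i, σ i * (divCount (p i) b n : ℤ)) ↔
      ∀ x, 0 ≤ ∑ i, σ i * (XiCount (p i) b a (e i) x : ℤ) := by
  let T : Finset (Σ _ : ι, ℕ) := Finset.univ.sigma fun i ↦ dvdIndices (p i) b
  have horder : ∀ j ∈ T, ∀ j' ∈ T,
      cle (indexJump (p j.1) b a j.2) (indexJump (p j'.1) b a j'.2) ↔ j.2 ≤ j'.2 :=
    fun j hj j' hj' ↦ cle_indexJump_iff (hp _) (hp _) (hs _) (hs _) (hb _) (hb _) (hbb _ _) ha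
      (Finset.mem_sigma.1 hj).2 (Finset.mem_sigma.1 hj').2
  have hindices (x : ℕ) : ∑ i, σ i * (((dvdIndices (p i) b).filter (· ≤ x)).card : ℤ) =
      ∑ j ∈ T with j.2 ≤ x, σ j.1 :=
    (sum_sigma_filter_eq_sum_mul_card _ (fun _ ↦ (· ≤ x)) σ).symm
  have hXi (x : ℝ) : ∑ i, σ i * (XiCount (p i) b a (e i) x : ℤ) =
      ∑ j ∈ T with cle (indexJump (p j.1) b a j.2) x, σ j.1 := by
    rw [sum_sigma_filter_eq_sum_mul_card _ (fun i k ↦ cle (indexJump (p i) b a k) x) σ]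
    simp only [fun i ↦ XiCount_eq_card_dvdIndices (a := a) (hp i) (hs i) (hb i) (he i)]
  simp only [forall_sum_divCount_nonneg_iff_dvdIndices hb0, hindices, hXi]
  rw [forall_sum_filter_nonneg_iff cle_trans T
      (fun j ↦ indexJump (p j.1) b a j.2) Sigma.snd (fun j ↦ σ j.1) horder,
    forall_sum_filter_nonneg_iff (r := (· ≤ ·)) (fun _ _ _ ↦ le_trans) T Sigma.snd Sigma.snd
      (fun j ↦ σ j.1) fun _ _ _ _ ↦ Iff.rfl]

end CountingDivisibleFactors

section XiAsymptotics

lemma aOf_pos (d b : ℕ) : 0 < aOf d b := by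
  unfold aOf
  split_ifs with h
  · exact h.choose_spec.1
  · exact one_pos

variable {v w : ℕ} {rr : Fin v → ℤ × ℤ} {tt : Fin w → ℤ × ℤ}

lemma dvd_dRT (x : Fin v ⊕ Fin w) : (Sum.elim rr tt x).2 ∣ (dRT rr tt : ℤ) := by
  rw [← Int.natAbs_dvd, Int.natCast_dvd_natCast]
  obtain i | j := x
  · exact (Finset.dvd_lcm (Finset.mem_univ i)).trans (Nat.dvd_lcm_left _ _)
  · exact (Finset.dvd_lcm (Finset.mem_univ j)).trans (Nat.dvd_lcm_right _ _)

lemma dRT_pos (hs : ∀ x, (Sum.elim rr tt x).2 ≠ 0) : 0 < dRT rr tt := by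
  refine Nat.lcm_pos ?_ ?_ <;> refine Nat.pos_of_ne_zero fun h ↦ ?_ <;>
    obtain ⟨i, -, hi⟩ := Finset.lcm_eq_zero_iff.1 h
  · exact hs (.inl i) (Int.natAbs_eq_zero.1 hi)
  · exact hs (.inr i) (Int.natAbs_eq_zero.1 hi)

lemma Xi_eq_sum (b : ℕ) (e : Fin v ⊕ Fin w → ℤ) (x : ℝ) :
    Xi rr tt b (e ∘ .inl) (e ∘ .inr) x =
      ∑ i : Fin v ⊕ Fin w, Sum.elim (fun _ ↦ (1 : ℤ)) (fun _ ↦ -1) i *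
        (XiCount (Sum.elim rr tt i) b (aOf (dRT rr tt) b) (e i) x : ℤ) := by
  simp [Xi, Fintype.sum_sum_type, sub_eq_add_neg]

lemma eventually_forall_abs_lt {κ : Type*} [Finite κ] (f : κ → ℤ) :
    ∀ᶠ b : ℕ in Filter.atTop, ∀ i, |f i| < b :=
  Filter.eventually_all.2 fun i ↦
    (tendsto_natCast_atTop_atTop (R := ℤ)).eventually (Filter.eventually_gt_atTop |f i|)

theorem eventually_forall_divCount_nonneg_iff_Xi (hs : ∀ x, (Sum.elim rr tt x).2 ≠ 0)
    (hp : ∀ x, ∀ n : ℕ, (Sum.elim rr tt x).1 + (Sum.elim rr tt x).2 * n ≠ 0) :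
    ∀ᶠ b in Filter.atTop, ∀ b₀, b ≡ b₀ [MOD dRT rr tt] →
      ((∀ n, 0 ≤ ∑ i, (divCount (rr i) b n : ℤ) - ∑ j, (divCount (tt j) b n : ℤ)) ↔
        ∀ (e : Fin v → ℤ) (f : Fin w → ℤ), (∀ i, goodChoice (rr i) b₀ (e i)) →
          (∀ j, goodChoice (tt j) b₀ (f j)) → ∀ x : ℝ, 0 ≤ Xi rr tt b₀ e f x) := by
  set p : Fin v ⊕ Fin w → ℤ × ℤ := Sum.elim rr tt with hp_def
  filter_upwards [Filter.eventually_gt_atTop 0, eventually_forall_abs_lt fun i ↦ (p i).1,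
    eventually_forall_abs_lt fun ij : (Fin v ⊕ Fin w) × (Fin v ⊕ Fin w) ↦
      (p ij.1).2 * (p ij.2).1 - (p ij.2).2 * (p ij.1).1] with b hb0 hb hbb b₀ hmod
  have hcongr i : (b : ℤ) ≡ b₀ [ZMOD (p i).2] :=
    (Int.natCast_modEq_iff.2 hmod).of_dvd (dvd_dRT i)
  have hXi {e : Fin v ⊕ Fin w → ℤ} (he : ∀ i, goodChoice (p i) b₀ (e i)) :
      (∀ n, 0 ≤ ∑ i, (divCount (rr i) b n : ℤ) - ∑ j, (divCount (tt j) b n : ℤ)) ↔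
        ∀ x, 0 ≤ Xi rr tt b₀ (e ∘ .inl) (e ∘ .inr) x := by
    have key := forall_sum_divCount_nonneg_iff_XiCount
      (Sum.elim (fun _ ↦ 1) fun _ ↦ -1) hp hs hb0 hb (fun i j ↦ hbb (i, j))
      (Int.natCast_pos.2 (aOf_pos (dRT rr tt) b₀))
      fun i ↦ (goodChoice_congr (hcongr i) _).2 (he i)
    simp only [Xi_eq_sum, ← hp_def, ← fun i ↦ XiCount_congr (hcongr i)]
    rw [← key]
    simp [p, Fintype.sum_sum_type, sub_eq_add_neg]
  constructor
  · intro h e f he hf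
    exact (hXi (e := Sum.elim e f) (Sum.forall.2 ⟨he, hf⟩)).1 h
  · choose e he using fun i ↦ exists_goodChoice (hs i) b₀
    exact fun h ↦ (hXi he).2 (h _ _ (fun i ↦ he (.inl i)) fun j ↦ he (.inr j))

end XiAsymptotics

section CyclotomicPolynomials

/-- The embedding of `ℤ[q]` into `ℚ(q)`, that is `polyZ` as a ring homomorphism. -/
noncomputable def polyZHom : ℤ[X] →+* RatFunc ℚ :=
  (algebraMap ℚ[X] (RatFunc ℚ)).comp (mapRingHom (Int.castRingHom ℚ))

lemma polyZHom_apply (g : ℤ[X]) : polyZHom g = polyZ g := rfl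

lemma polyZHom_injective : Function.Injective polyZHom :=
  (RatFunc.algebraMap_injective ℚ).comp (map_injective _ Int.cast_injective)

lemma polyZHom_X : polyZHom X = RatFunc.X := by
  rw [polyZHom_apply, polyZ, map_X, RatFunc.algebraMap_X]

lemma polyZHom_cyclotomic_ne_zero (b : ℕ) : polyZHom (cyclotomic b ℤ) ≠ 0 :=
  (map_ne_zero_iff _ polyZHom_injective).2 (cyclotomic_ne_zero _ _)

lemma isIntPoly_iff_mem_range (f : RatFunc ℚ) : IsIntPoly f ↔ f ∈ polyZHom.range :=
  exists_congr fun _ ↦ eq_comm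

lemma zpow_mul_pow_toNat_neg {F : Type*} [GroupWithZero F] {x : F} (hx : x ≠ 0) (m : ℤ) :
    x ^ m * x ^ (-m).toNat = x ^ m.toNat := by
  rw [← zpow_natCast, ← zpow_natCast, ← zpow_add₀ hx]
  congr 1
  lia

lemma zpow_mem_range_of_nonneg {A F : Type*} [Ring A] [DivisionRing F] (φ : A →+* F) (a : A)
    {m : ℤ} (hm : 0 ≤ m) : φ a ^ m ∈ φ.range := by
  lift m to ℕ using hm
  exact ⟨a ^ m, by rw [map_pow, zpow_natCast]⟩

lemma exponent_nonneg_of_mul_prod_zpow_mem_range {A F ι : Type*} [CommRing A] [Field F]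
    {φ : A →+* F} (hφ : Function.Injective φ) {S : Finset ι} {π : ι → A} {E : ι → ℤ} {a : A}
    {i : ι} (hi : i ∈ S) (hprime : Prime (π i)) (ha : ¬ π i ∣ a)
    (hπ : ∀ j ∈ S, j ≠ i → ¬ π i ∣ π j) (h : φ a * ∏ j ∈ S, φ (π j) ^ E j ∈ φ.range) :
    0 ≤ E i := by
  by_contra! hneg
  obtain ⟨g, hg⟩ := h
  have hne j (hj : j ∈ S) : φ (π j) ≠ 0 := by
    rw [map_ne_zero_iff _ hφ]
    rintro hzero
    obtain rfl | hji := eq_or_ne j i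
    · exact hprime.ne_zero hzero
    · exact hπ j hj hji (hzero ▸ dvd_zero _)
  have hclear : a * ∏ j ∈ S, π j ^ (E j).toNat = g * ∏ j ∈ S, π j ^ (-E j).toNat := by
    apply hφ
    simp only [map_mul, map_prod, map_pow, hg]
    rw [mul_assoc, ← Finset.prod_mul_distrib]
    exact congrArg _ (Finset.prod_congr rfl fun j hj ↦ (zpow_mul_pow_toNat_neg (hne j hj) _).symm)
  have hdvd : π i ∣ a * ∏ j ∈ S, π j ^ (E j).toNat := by
    rw [hclear]
    have hpow : π i ∣ π i ^ (-E i).toNat := dvd_pow_self _ (by lia)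
    exact (hpow.trans (Finset.dvd_prod_of_mem (fun j ↦ π j ^ (-E j).toNat) hi)).mul_left g
  obtain ⟨j, hj, hij⟩ := (hprime.dvd_finsetProd_iff _).1 ((hprime.dvd_or_dvd hdvd).resolve_left ha)
  obtain rfl | hji := eq_or_ne j i
  · rw [Int.toNat_of_nonpos hneg.le, pow_zero] at hij
    exact hprime.not_isUnit (isUnit_of_dvd_one hij)
  · exact hπ j hj hji (hprime.dvd_of_dvd_pow hij)

lemma eq_of_cyclotomic_dvd_cyclotomic {a b : ℕ} (ha : 0 < a) (hb : 0 < b)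
    (h : cyclotomic a ℤ ∣ cyclotomic b ℤ) : a = b :=
  cyclotomic_injective (R := ℤ) <| eq_of_monic_of_associated (cyclotomic.monic _ _)
    (cyclotomic.monic _ _) <|
      (cyclotomic.irreducible ha).associated_of_dvd (cyclotomic.irreducible hb) h

lemma not_cyclotomic_dvd_X {b : ℕ} (hb : 0 < b) : ¬ cyclotomic b ℤ ∣ X := fun h ↦
  (cyclotomic.irreducible hb).not_isUnit <| isUnit_of_dvd_one <|
    (dvd_sub_right (h.trans (dvd_pow_self X hb.ne'))).1 (cyclotomic.dvd_X_pow_sub_one b ℤ)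

lemma eventually_not_cyclotomic_dvd {D : ℤ[X]} (hD : D ≠ 0) :
    ∀ᶠ b : ℕ in Filter.atTop, ¬ cyclotomic b ℤ ∣ D := by
  have hD' : D.map (Int.castRingHom ℚ) ≠ 0 :=
    (Polynomial.map_ne_zero_iff (Int.castRingHom ℚ).injective_int).2 hD
  have hfin := (UniqueFactorizationMonoid.normalizedFactors
    (D.map (Int.castRingHom ℚ))).toFinset.finite_toSet
  have hevent := (hfin.preimage (cyclotomic_injective (R := ℚ)).injOn).eventually_cofinite_notMem
  rw [Nat.cofinite_eq_atTop] at hevent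
  filter_upwards [hevent, Filter.eventually_gt_atTop 0] with b hb hb0 hdvd
  rw [Set.mem_preimage, Finset.mem_coe, Multiset.mem_toFinset,
    UniqueFactorizationMonoid.mem_normalizedFactors_iff' hD'] at hb
  refine hb ⟨cyclotomic.irreducible_rat hb0, (cyclotomic.monic _ _).normalize_eq_self, ?_⟩
  rw [← map_cyclotomic_int b ℚ]
  exact Polynomial.map_dvd _ hdvd

lemma prod_cyclotomic_zpow_ite_dvd {m : ℤ} (hm : m ≠ 0) {M : ℕ} (hM : m.natAbs ≤ M) :
    ∏ b ∈ Finset.Icc 1 M, polyZHom (cyclotomic b ℤ) ^ (if (b : ℤ) ∣ m then 1 else 0 : ℤ) =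
      RatFunc.X ^ m.natAbs - 1 := by
  have hpos : 0 < m.natAbs := Int.natAbs_pos.2 hm
  have hdivisors : (Finset.Icc 1 M).filter (fun b : ℕ ↦ (b : ℤ) ∣ m) = m.natAbs.divisors := by
    ext b
    simp only [Finset.mem_filter, Finset.mem_Icc, Nat.mem_divisors, Int.natCast_dvd]
    exact ⟨fun h ↦ ⟨h.2, hpos.ne'⟩, fun h ↦
      ⟨⟨Nat.pos_of_dvd_of_pos h.1 hpos, (Nat.le_of_dvd hpos h.1).trans hM⟩, h.1⟩⟩
  simp only [pow_ite, zpow_one, zpow_zero]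
  rw [← Finset.prod_filter, hdivisors, ← map_prod, prod_cyclotomic_eq_X_pow_sub_one hpos, map_sub,
    map_pow, map_one, polyZHom_X]

end CyclotomicPolynomials

/-- `f` is, up to sign, the product of `q ^ z` and of the powers `Φ_b ^ E b` of the cyclotomic
polynomials with `b ≥ 1`. This is phrased with all large partial products in order to avoid a
finiteness condition on the support of `E`; the value `E 0` plays no role. -/
def IsCyclotomicProd (f : RatFunc ℚ) (z : ℤ) (E : ℕ → ℤ) : Prop :=
  ∃ ε : ℤˣ, ∀ᶠ M : ℕ in Filter.atTop, f = ((ε : ℤ) : RatFunc ℚ) * RatFunc.X ^ z *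
    ∏ b ∈ Finset.Icc 1 M, polyZHom (cyclotomic b ℤ) ^ E b

namespace IsCyclotomicProd

variable {f g : RatFunc ℚ} {z z' : ℤ} {E E' : ℕ → ℤ}

protected lemma one : IsCyclotomicProd 1 0 fun _ ↦ 0 :=
  ⟨1, .of_forall fun M ↦ by simp⟩

protected lemma mul (hf : IsCyclotomicProd f z E) (hg : IsCyclotomicProd g z' E') :
    IsCyclotomicProd (f * g) (z + z') fun b ↦ E b + E' b := by
  obtain ⟨ε, hf⟩ := hf
  obtain ⟨ε', hg⟩ := hg
  refine ⟨ε * ε', (hf.and hg).mono fun M ⟨hfM, hgM⟩ ↦ ?_⟩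
  simp only [zpow_add₀ (RatFunc.X_ne_zero (K := ℚ)), zpow_add₀ (polyZHom_cyclotomic_ne_zero _),
    Finset.prod_mul_distrib, Units.val_mul, Int.cast_mul]
  rw [hfM, hgM]
  ring

protected lemma inv (hf : IsCyclotomicProd f z E) :
    IsCyclotomicProd f⁻¹ (-z) fun b ↦ -E b := by
  obtain ⟨ε, hf⟩ := hf
  refine ⟨ε, hf.mono fun M hfM ↦ ?_⟩
  have hε : ((ε : ℤ) : RatFunc ℚ)⁻¹ = (ε : ℤ) := by
    obtain rfl | rfl := Int.units_eq_one_or ε <;> simp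
  simp only [zpow_neg, Finset.prod_inv_distrib]
  rw [hfM, mul_inv, mul_inv, hε]

protected lemma div (hf : IsCyclotomicProd f z E) (hg : IsCyclotomicProd g z' E') :
    IsCyclotomicProd (f / g) (z - z') fun b ↦ E b - E' b := by
  simpa only [div_eq_mul_inv, sub_eq_add_neg] using hf.mul hg.inv

protected lemma prod {ι : Type*} (S : Finset ι) {f : ι → RatFunc ℚ} {z : ι → ℤ} {E : ι → ℕ → ℤ}
    (h : ∀ i, IsCyclotomicProd (f i) (z i) (E i)) :
    IsCyclotomicProd (∏ i ∈ S, f i) (∑ i ∈ S, z i) fun b ↦ ∑ i ∈ S, E i b := by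
  induction S using Finset.cons_induction with
  | empty => exact .one
  | cons i S hi ih => simpa only [Finset.prod_cons, Finset.sum_cons] using (h i).mul ih

protected lemma pow (hf : IsCyclotomicProd f z E) (n : ℕ) :
    IsCyclotomicProd (f ^ n) (n * z) fun b ↦ n * E b := by
  simpa using IsCyclotomicProd.prod (Finset.range n) fun _ ↦ hf

lemma mem_range (hf : IsCyclotomicProd f z E) (hz : 0 ≤ z) (hE : ∀ b, 0 ≤ E b) :
    f ∈ polyZHom.range := by
  obtain ⟨ε, hf⟩ := hf
  obtain ⟨M, rfl⟩ := hf.exists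
  refine mul_mem (mul_mem (intCast_mem _ _) ?_)
    (prod_mem fun b _ ↦ zpow_mem_range_of_nonneg _ _ (hE b))
  rw [← polyZHom_X]
  exact zpow_mem_range_of_nonneg _ _ hz

lemma exponent_nonneg (hf : IsCyclotomicProd f z E) {a : ℤ[X]} {b : ℕ} (hb : 0 < b)
    (ha : ¬ cyclotomic b ℤ ∣ a) (h : polyZHom a * f ∈ polyZHom.range) : 0 ≤ E b := by
  obtain ⟨ε, hf⟩ := hf
  obtain ⟨M, hM, hbM⟩ := (hf.and (Filter.eventually_ge_atTop b)).exists
  have hprime : Prime (cyclotomic b ℤ) := (cyclotomic.irreducible hb).prime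
  have hunit : IsUnit ((ε : ℤ) : ℤ[X]) := ε.isUnit.map (Int.castRingHom ℤ[X])
  refine exponent_nonneg_of_mul_prod_zpow_mem_range polyZHom_injective
    (a := a * ((ε : ℤ) : ℤ[X]) * X ^ z.toNat) (π := fun b ↦ cyclotomic b ℤ)
    (Finset.mem_Icc.2 ⟨hb, hbM⟩) hprime (fun hdvd ↦ ?_) (fun j hj hjb hdvd ↦
      hjb (eq_of_cyclotomic_dvd_cyclotomic hb (Finset.mem_Icc.1 hj).1 hdvd).symm) ?_
  · obtain hdvd | hdvd := hprime.dvd_or_dvd hdvd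
    · exact ha (hunit.dvd_mul_right.1 hdvd)
    · exact not_cyclotomic_dvd_X hb (hprime.dvd_of_dvd_pow hdvd)
  · convert mul_mem h (polyZHom.mem_range_self (X ^ (-z).toNat)) using 1
    simp only [map_mul, map_pow, map_intCast, polyZHom_X]
    rw [hM, ← zpow_mul_pow_toNat_neg RatFunc.X_ne_zero]
    ring

end IsCyclotomicProd

section QHypergeometric

lemma isCyclotomicProd_one_sub_X_zpow {m : ℤ} (hm : m ≠ 0) :
    IsCyclotomicProd (1 - RatFunc.X ^ m) (min m 0) fun b ↦ if (b : ℤ) ∣ m then 1 else 0 := by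
  obtain hneg | hpos := lt_or_gt_of_ne hm
  · refine ⟨1, (Filter.eventually_ge_atTop m.natAbs).mono fun M hM ↦ ?_⟩
    rw [prod_cyclotomic_zpow_ite_dvd hm hM, min_eq_left hneg.le, ← zpow_natCast,
      Int.ofNat_natAbs_of_nonpos hneg.le, Units.val_one, Int.cast_one, one_mul, mul_sub, mul_one,
      ← zpow_add₀ RatFunc.X_ne_zero, add_neg_cancel, zpow_zero]
  · refine ⟨-1, (Filter.eventually_ge_atTop m.natAbs).mono fun M hM ↦ ?_⟩
    rw [prod_cyclotomic_zpow_ite_dvd hm hM, min_eq_right hpos.le, ← zpow_natCast,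
      Int.natAbs_of_nonneg hpos.le]
    simp

lemma isCyclotomicProd_qPoch {p : ℤ × ℤ} (hp : ∀ k : ℕ, p.1 + p.2 * k ≠ 0) (n : ℕ) :
    IsCyclotomicProd (qPoch p.1 p.2 n) (∑ k ∈ Finset.range n, min (p.1 + p.2 * (k : ℤ)) 0)
      fun b ↦ divCount p b n := by
  simpa only [qPoch, divCount, Nat.count_eq_card_filter_range, Finset.sum_boole] using
    IsCyclotomicProd.prod (Finset.range n) fun k ↦ isCyclotomicProd_one_sub_X_zpow (hp k)

variable {v w : ℕ} {rr : Fin v → ℤ × ℤ} {tt : Fin w → ℤ × ℤ}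

lemma isCyclotomicProd_qHyp (hr : ∀ i, ∀ k : ℕ, (rr i).1 + (rr i).2 * k ≠ 0)
    (ht : ∀ j, ∀ k : ℕ, (tt j).1 + (tt j).2 * k ≠ 0) (n : ℕ) :
    IsCyclotomicProd (qHyp rr tt n)
      (∑ i, ∑ k ∈ Finset.range n, min ((rr i).1 + (rr i).2 * (k : ℤ)) 0 -
        ∑ j, ∑ k ∈ Finset.range n, min ((tt j).1 + (tt j).2 * (k : ℤ)) 0)
      fun b ↦ ∑ i, (divCount (rr i) b n : ℤ) - ∑ j, (divCount (tt j) b n : ℤ) :=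
  (IsCyclotomicProd.prod _ fun i ↦ isCyclotomicProd_qPoch (hr i) n).div
    (IsCyclotomicProd.prod _ fun j ↦ isCyclotomicProd_qPoch (ht j) n)

lemma isCyclotomicProd_X_pow_mul_prod_cyclotomic (K B w : ℕ) :
    IsCyclotomicProd (polyZHom (X ^ K * ∏ b ∈ Finset.Icc 1 B, cyclotomic b ℤ ^ w)) K
      fun b ↦ if b ≤ B then w else 0 := by
  refine ⟨1, (Filter.eventually_ge_atTop B).mono fun M hBM ↦ ?_⟩
  have hfilter : (Finset.Icc 1 M).filter (· ≤ B) = Finset.Icc 1 B := by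
    ext b
    simp only [Finset.mem_filter, Finset.mem_Icc]
    lia
  simp only [pow_ite, zpow_zero, zpow_natCast]
  rw [← Finset.prod_filter, hfilter]
  simp [polyZHom_X]

/-- A power of `C` only clears negative exponents of the finitely many `Φ_b` dividing `C`.
Conversely, the exponents being bounded below linearly in `n`, a suitable product of powers of `q`
and of finitely many `Φ_b` serves as `C`. -/
theorem exists_pow_mul_isIntPoly_iff {R : ℕ → RatFunc ℚ} {z : ℕ → ℤ} {E : ℕ → ℕ → ℤ} {K w : ℕ}
    (hR : ∀ n, IsCyclotomicProd (R n) (z n) (E n)) (hz : ∀ n : ℕ, -(n * K : ℤ) ≤ z n)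
    (hE : ∀ n b : ℕ, -(n * w : ℤ) ≤ E n b) :
    (∃ C : ℤ[X], C ≠ 0 ∧ ∀ n : ℕ, IsIntPoly (polyZ C ^ n * R n)) ↔
      ∀ᶠ b in Filter.atTop, ∀ n, 0 ≤ E n b := by
  simp only [isIntPoly_iff_mem_range, ← polyZHom_apply]
  constructor
  · rintro ⟨C, hC, hCR⟩
    filter_upwards [eventually_not_cyclotomic_dvd hC, Filter.eventually_gt_atTop 0]
      with b hbC hb n
    refine (hR n).exponent_nonneg hb (a := C ^ n)
      (fun h ↦ hbC ((cyclotomic.irreducible hb).prime.dvd_of_dvd_pow h)) ?_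
    rw [map_pow]
    exact hCR n
  · intro h
    obtain ⟨B, hB⟩ := Filter.eventually_atTop.1 h
    refine ⟨X ^ K * ∏ b ∈ Finset.Icc 1 B, cyclotomic b ℤ ^ w, ?_, fun n ↦ ?_⟩
    · exact ((monic_X_pow K).mul (monic_prod_of_monic _ _ fun b _ ↦
        (cyclotomic.monic b ℤ).pow w)).ne_zero
    · refine (((isCyclotomicProd_X_pow_mul_prod_cyclotomic K B w).pow n).mul (hR n)).mem_range
        (neg_le_iff_add_nonneg'.1 (hz n)) fun b ↦ ?_
      split_ifs with hb
      · exact neg_le_iff_add_nonneg'.1 (hE n b)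
      · rw [mul_zero, zero_add]
        exact hB b (le_of_not_ge hb) n

lemma add_mul_ne_zero_of_not_isNonPosInt {p : ℤ × ℤ} (h : ¬ IsNonPosInt (ratOf p)) (k : ℕ) :
    p.1 + p.2 * k ≠ 0 := by
  intro hzero
  have hs : (p.2 : ℚ) ≠ 0 := fun hs ↦ h ⟨0, le_rfl, by simp [ratOf, hs]⟩
  refine h ⟨-k, by simp, ?_⟩
  rw [ratOf, div_eq_iff hs]
  exact_mod_cast (by linarith : p.1 = -k * p.2)

lemma neg_mul_abs_le_sum_min {p : ℤ × ℤ} (hs : 0 ≤ p.2) (n : ℕ) :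
    -(n * |p.1|) ≤ ∑ k ∈ Finset.range n, min (p.1 + p.2 * (k : ℤ)) 0 := by
  have hterm (k : ℕ) : -|p.1| ≤ min (p.1 + p.2 * (k : ℤ)) 0 :=
    le_min ((neg_abs_le _).trans (le_add_of_nonneg_right (by positivity)))
      (neg_nonpos.2 (abs_nonneg _))
  simpa using Finset.card_nsmul_le_sum (Finset.range n) _ (-|p.1|) fun k _ ↦ hterm k

theorem exists_pow_mul_qHyp_isIntPoly_iff (hs : ∀ i, 0 ≤ (rr i).2)
    (hr : ∀ i, ∀ k : ℕ, (rr i).1 + (rr i).2 * k ≠ 0)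
    (ht : ∀ j, ∀ k : ℕ, (tt j).1 + (tt j).2 * k ≠ 0) :
    (∃ C : ℤ[X], C ≠ 0 ∧ ∀ n : ℕ, IsIntPoly (polyZ C ^ n * qHyp rr tt n)) ↔
      ∀ᶠ b in Filter.atTop, ∀ n,
        0 ≤ ∑ i, (divCount (rr i) b n : ℤ) - ∑ j, (divCount (tt j) b n : ℤ) := by
  refine exists_pow_mul_isIntPoly_iff (K := ∑ i, (rr i).1.natAbs) (w := w)
    (isCyclotomicProd_qHyp hr ht) (fun n ↦ ?_) fun n b ↦ ?_
  · have hnum : -(n * ∑ i, |(rr i).1|) ≤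
        ∑ i, ∑ k ∈ Finset.range n, min ((rr i).1 + (rr i).2 * (k : ℤ)) 0 := by
      rw [Finset.mul_sum, ← Finset.sum_neg_distrib]
      exact Finset.sum_le_sum fun i _ ↦ neg_mul_abs_le_sum_min (hs i) n
    have hden : ∑ j, ∑ k ∈ Finset.range n, min ((tt j).1 + (tt j).2 * (k : ℤ)) 0 ≤ 0 :=
      Finset.sum_nonpos fun j _ ↦ Finset.sum_nonpos fun k _ ↦ min_le_right _ _
    push_cast
    linarith
  · have hnum : 0 ≤ ∑ i, (divCount (rr i) b n : ℤ) := by positivity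
    have hden : ∑ j, (divCount (tt j) b n : ℤ) ≤ n * w := by
      simpa [mul_comm] using Finset.sum_le_card_nsmul Finset.univ
        (fun j ↦ (divCount (tt j) b n : ℤ)) n fun j _ ↦ Int.ofNat_le.2 (Nat.count_le _)
    linarith

end QHypergeometric

/-- Theorem 1.4: efficient criterion for q-integrality when all `s_i > 0`. -/
theorem q_integrality_xi_criterion {v w : ℕ} (rr : Fin v → ℤ × ℤ) (tt : Fin w → ℤ × ℤ)
    (hs : ∀ i, 0 < (rr i).2) (hu : ∀ j, (tt j).2 ≠ 0)
    (ht : ∀ j, ¬ IsNonPosInt (ratOf (tt j))) (hr : ∀ i, ¬ IsNonPosInt (ratOf (rr i))) :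
    (∃ C : Polynomial ℤ, C ≠ 0 ∧ ∀ n : ℕ, IsIntPoly (polyZ C ^ n * qHyp rr tt n)) ↔
      (∀ b : ℕ, 1 ≤ b → b ≤ dRT rr tt →
        ∀ (e : Fin v → ℤ) (f : Fin w → ℤ),
          (∀ i, goodChoice (rr i) b (e i)) → (∀ j, goodChoice (tt j) b (f j)) →
            ∀ x : ℝ, 0 ≤ Xi rr tt b e f x) := by
  have hr' i := add_mul_ne_zero_of_not_isNonPosInt (hr i)
  have ht' j := add_mul_ne_zero_of_not_isNonPosInt (ht j)
  have hs' : ∀ x, (Sum.elim rr tt x).2 ≠ 0 := Sum.forall.2 ⟨fun i ↦ (hs i).ne', hu⟩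
  rw [exists_pow_mul_qHyp_isIntPoly_iff (fun i ↦ (hs i).le) hr' ht']
  exact eventually_iff_forall_residue (dRT_pos hs')
    (eventually_forall_divCount_nonneg_iff_Xi hs' (Sum.forall.2 ⟨hr', ht'⟩))
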